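/- For every positive integer k, there exists a compact metrizable space whose fd-height is exactly k. -/

import Mathlib

open Set Function

noncomputable section

/-- Topology of pointwise convergence on `C(X, ℝ)`. -/
def ptTop (X : Type*) [TopologicalSpace X] : TopologicalSpace C(X, ℝ) :=
  TopologicalSpace.induced (fun f => (f : X → ℝ)) Pi.topologicalSpace

/-- `X` ℓ-dominates `Y`: a continuous linear map of `C_p(X)` onto `C_p(Y)`. -/
def LDominates (X Y : Type*) [TopologicalSpace X] [TopologicalSpace Y] : Prop :=
  ∃ L : C(X, ℝ) →ₗ[ℝ] C(Y, ℝ), @Continuous _ _ (ptTop X) (ptTop Y) L ∧ Surjective L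

/-- Covering dimension at most `n`. -/
def CovDimLE (X : Type*) [TopologicalSpace X] (n : ℕ) : Prop :=
  ∀ (ι : Type) (U : ι → Set X), Finite ι → (∀ i, IsOpen (U i)) → (⋃ i, U i) = univ →
    ∃ V : ι → Set X, (∀ i, IsOpen (V i)) ∧ (∀ i, V i ⊆ U i) ∧ (⋃ i, V i) = univ ∧
      ∀ x : X, {i | x ∈ V i}.ncard ≤ n + 1

/-- Finite (covering) dimensional space. -/
def FinDimSpace (X : Type*) [TopologicalSpace X] : Prop := ∃ n : ℕ, CovDimLE X n

/-- Strongly countable dimensional space. -/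
def StronglyCountableDim (X : Type*) [TopologicalSpace X] : Prop :=
  ∃ F : ℕ → Set X, (∀ n, IsClosed (F n)) ∧ (∀ n, FinDimSpace ↥(F n)) ∧ (⋃ n, F n) = univ

/-- `I(S)` relative to a subset: points of `S` with a relatively open
finite dimensional neighbourhood in `S`. -/
def fdI (X : Type*) [TopologicalSpace X] (S : Set X) : Set X :=
  {x | x ∈ S ∧ ∃ U : Set X, IsOpen U ∧ x ∈ U ∧ FinDimSpace ↥(U ∩ S)}

/-- The transfinite derived sets `K^[α]`. -/
def fdDerived (X : Type*) [TopologicalSpace X] : Ordinal → Set X := fun o =>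
  Ordinal.limitRecOn o (univ : Set X)
    (fun _ S => S \ fdI X S)
    (fun o _ ih => ⋂ (o' : Ordinal) (h : o' < o), ih o' h)

/-- A k_ω sequence for `X`. -/
def IsKOmegaSeq (X : Type*) [TopologicalSpace X] (K : ℕ → Set X) : Prop :=
  (∀ n, IsCompact (K n)) ∧ (∀ n, K n ⊆ K (n + 1)) ∧
  (∀ C : Set X, IsCompact C → ∃ n, C ⊆ K n) ∧
  (∀ A : Set X, (∀ n, ∃ F : Set X, IsClosed F ∧ A ∩ K n = F ∩ K n) → IsClosed A)

def KOmegaSpace (X : Type*) [TopologicalSpace X] : Prop := ∃ K : ℕ → Set X, IsKOmegaSeq X K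

/-- Submetrizable: there is a coarser metrizable topology. -/
def Submetrizable (X : Type*) [TopologicalSpace X] : Prop :=
  ∃ t' : TopologicalSpace X, (∀ s : Set X, @IsOpen X t' s → IsOpen s) ∧
    @TopologicalSpace.MetrizableSpace X t'

def Hemicompact (X : Type*) [TopologicalSpace X] : Prop :=
  ∃ K : ℕ → Set X, (∀ n, IsCompact (K n)) ∧ ∀ C : Set X, IsCompact C → ∃ n, C ⊆ K n

/-- `B` is (functionally) bounded in `X`. -/
def CBounded (X : Type*) [TopologicalSpace X] (B : Set X) : Prop :=
  ∀ f : C(X, ℝ), ∃ M : ℝ, ∀ x ∈ B, |f x| ≤ M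

/-- μ-space: closed bounded subsets are compact. -/
def MuSpace (X : Type*) [TopologicalSpace X] : Prop :=
  ∀ B : Set X, IsClosed B → CBounded X B → IsCompact B

/-- `C(K; A)`: continuous functions vanishing on `A`, as a submodule. -/
def Czero (K : Type*) [TopologicalSpace K] (A : Set K) : Submodule ℝ C(K, ℝ) where
  carrier := {f | ∀ x ∈ A, f x = 0}
  add_mem' := by intro f g hf hg x hx; simp [hf x hx, hg x hx]
  zero_mem' := by intro x hx; simp
  smul_mem' := by intro c f hf x hx; simp [hf x hx]

/-- Pointwise topology on `C(K;A)`. -/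
def ptTopSub {K : Type*} [TopologicalSpace K] (A : Set K) :
    TopologicalSpace (Czero K A) :=
  TopologicalSpace.induced (fun f => (f : C(K, ℝ))) (ptTop K)

/-- `c`-good map between relative function spaces. -/
def IsCGood {K₁ K₂ : Type*} [TopologicalSpace K₁] [CompactSpace K₁]
    [TopologicalSpace K₂] [CompactSpace K₂] (A₁ : Set K₁) (A₂ : Set K₂) (c : ℝ)
    (L : Czero K₁ A₁ →ₗ[ℝ] Czero K₂ A₂) : Prop :=
  @Continuous _ _ (ptTopSub A₁) (ptTopSub A₂) L ∧
  (∀ g : Czero K₁ A₁, ‖(L g : C(K₂, ℝ))‖ ≤ ‖(g : C(K₁, ℝ))‖) ∧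
  (∀ f : Czero K₂ A₂, ∃ g : Czero K₁ A₁, L g = f ∧
    ‖(g : C(K₁, ℝ))‖ ≤ c * ‖(f : C(K₂, ℝ))‖)

/-- `c`-good map between full function spaces. -/
def IsCGoodMap {K₁ K₂ : Type*} [TopologicalSpace K₁] [CompactSpace K₁]
    [TopologicalSpace K₂] [CompactSpace K₂] (c : ℝ)
    (L : C(K₁, ℝ) →ₗ[ℝ] C(K₂, ℝ)) : Prop :=
  @Continuous _ _ (ptTop K₁) (ptTop K₂) L ∧
  (∀ g : C(K₁, ℝ), ‖L g‖ ≤ ‖g‖) ∧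
  (∀ f : C(K₂, ℝ), ∃ g : C(K₁, ℝ), L g = f ∧ ‖g‖ ≤ c * ‖f‖)

/-!
Let `Y` be the one-point compactification of the disjoint union of the cubes `[0, 1] ^ n`, `n ∈ ℕ`.
Its only point without a finite-dimensional neighbourhood is `∞`, since every neighbourhood of `∞`
contains cubes of arbitrarily large dimension. In `Y ^ m` this count accumulates: passing to the
next derived set requires one more coordinate to be `∞`, so the `j`-th derived set consists of the
points with at least `j` infinite coordinates. It contains `(∞, …, ∞)` for `j ≤ m` and is empty for
`j = m + 1`.

The inequality `n ≤ dim [0, 1] ^ n` rests on the Poincaré–Miranda theorem, whose combinatorial form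
is obtained from Stokes' theorem for cubical cochains modulo two: if each `f i` is a function on the
lattice cube `[0, N] ^ n` with value `0` on the face `x i = 0` and `1` on the face `x i = N`, then
the cup product of the `df i` sums to `1`, so on some unit cube no `f i` is constant.
-/

section Cubical

variable {ι R : Type*}

/-- Cubical cochains on the lattice `ι → ℕ`: `ω x J` is the value on the cube with least vertex `x`
and set of edge directions `J`. Cubes are not oriented, so the theory is meant for coefficients of
characteristic two. -/
abbrev CubicalCochain (ι R : Type*) : Type _ := (ι → ℕ) → Finset ι → R

/-- The vertices of the cube with least vertex `x` and set of edge directions `J`. -/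
def cube (x : ι → ℕ) (J : Finset ι) : Set (ι → ℕ) := Icc x (x + (J : Set ι).indicator 1)

lemma mem_cube_self (x : ι → ℕ) (J : Finset ι) : x ∈ cube x J :=
  ⟨le_rfl, le_add_of_nonneg_right (Set.indicator_nonneg (by simp))⟩

lemma cube_univ [Fintype ι] (x : ι → ℕ) : cube x Finset.univ = Icc x (x + 1) := by
  simp [cube]

lemma apply_eq_of_mem_cube {x y : ι → ℕ} {J : Finset ι} (hy : y ∈ cube x J) {i : ι} (hi : i ∉ J) :
    y i = x i :=
  le_antisymm (by simpa [hi] using hy.2 i) (hy.1 i)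

variable [DecidableEq ι]

lemma cube_add_single_erase_subset {j : ι} {J : Finset ι} (hj : j ∈ J) (x : ι → ℕ) :
    cube (x + Pi.single j 1) (J.erase j) ⊆ cube x J := by
  have h : Pi.single j 1 + ((J.erase j : Finset ι) : Set ι).indicator 1
      = (J : Set ι).indicator (1 : ι → ℕ) := by
    ext i
    rcases eq_or_ne i j with rfl | hij <;> simp [Set.indicator_apply, *]
  rw [cube, cube, add_assoc, h]
  exact Icc_subset_Icc_left (le_add_of_nonneg_right (Pi.single_nonneg.2 zero_le_one))

lemma add_single_mem_cube {j : ι} {J : Finset ι} (hj : j ∈ J) (x : ι → ℕ) :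
    x + Pi.single j 1 ∈ cube x J :=
  cube_add_single_erase_subset hj x (mem_cube_self _ _)

variable [CommRing R]

/-- The cubical coboundary operator. -/
def coboundary (ω : CubicalCochain ι R) : CubicalCochain ι R := fun x J =>
  ∑ j ∈ J, (ω (x + Pi.single j 1) (J.erase j) + ω x (J.erase j))

/-- The cup product `df ⌣ ω` of the coboundary of a function `f` with a cochain `ω`. -/
def diffCup (f : (ι → ℕ) → R) (ω : CubicalCochain ι R) : CubicalCochain ι R := fun x J =>
  ∑ j ∈ J, (f (x + Pi.single j 1) + f x) * ω (x + Pi.single j 1) (J.erase j)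

/-- The iterated cup product `df i₁ ⌣ ⋯ ⌣ df iₙ ⌣ 1` along the list `[i₁, …, iₙ]`. -/
def cupDiffs (f : ι → (ι → ℕ) → R) : List ι → CubicalCochain ι R
  | [] => fun _ J => if J = ∅ then 1 else 0
  | i :: L => diffCup (f i) (cupDiffs f L)

section CharTwo

variable [CharP R 2]

lemma coboundary_coboundary (ω : CubicalCochain ι R) : coboundary (coboundary ω) = 0 := by
  ext x J
  simp only [coboundary, ← Finset.sum_add_distrib, Finset.sum_sigma', Pi.zero_apply]
  refine Finset.sum_involution (fun p _ => ⟨p.2, p.1⟩) ?_ ?_ ?_ fun _ _ => rfl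
  · rintro ⟨j, k⟩ -
    rw [CharTwo.add_eq_zero, add_right_comm x (Pi.single k 1), Finset.erase_right_comm (a := k)]
    abel
  · rintro ⟨j, k⟩ hp - heq
    simp only [Finset.mem_sigma, Finset.mem_erase] at hp
    exact hp.2.1 (congrArg Sigma.fst heq)
  · rintro ⟨j, k⟩ hp
    simp only [Finset.mem_sigma, Finset.mem_erase] at hp ⊢
    exact ⟨hp.2.2, hp.2.1.symm, hp.1⟩

lemma coboundary_mul (f : (ι → ℕ) → R) (ω : CubicalCochain ι R) (x : ι → ℕ) (J : Finset ι) :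
    coboundary (fun y K => f y * ω y K) x J = diffCup f ω x J + f x * coboundary ω x J := by
  simp only [coboundary, diffCup, Finset.mul_sum, ← Finset.sum_add_distrib]
  refine Finset.sum_congr rfl fun j _ => ?_
  linear_combination -(f x * ω (x + Pi.single j 1) (J.erase j)) * CharTwo.two_eq_zero (R := R)

lemma diffCup_eq_coboundary (f : (ι → ℕ) → R) {ω : CubicalCochain ι R} (hω : coboundary ω = 0) :
    diffCup f ω = coboundary fun y K => f y * ω y K := by
  ext x J
  simp [coboundary_mul, hω]

lemma coboundary_cupDiffs (f : ι → (ι → ℕ) → R) (L : List ι) : coboundary (cupDiffs f L) = 0 := by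
  cases L with
  | nil =>
    ext x J
    exact Finset.sum_eq_zero fun j _ => CharTwo.add_self_eq_zero _
  | cons i L =>
    rw [cupDiffs, diffCup_eq_coboundary _ (coboundary_cupDiffs f L), coboundary_coboundary]

lemma cupDiffs_eq_zero {f : ι → (ι → ℕ) → R} {L : List ι} {i : ι} (hi : i ∈ L) {x : ι → ℕ}
    {J : Finset ι} {c : R} (hc : ∀ y ∈ cube x J, f i y = c) : cupDiffs f L x J = 0 := by
  induction L generalizing x J with
  | nil => simp at hi
  | cons k L ih =>
    refine Finset.sum_eq_zero fun j hj => ?_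
    rcases List.mem_cons.1 hi with rfl | hiL
    · rw [hc _ (add_single_mem_cube hj x), hc _ (mem_cube_self x J), CharTwo.add_self_eq_zero,
        zero_mul]
    · rw [ih hiL fun y hy => hc y (cube_add_single_erase_subset hj x hy), mul_zero]

variable [Fintype ι]

/-- The lattice points indexing the `J`-cubes in `[0, N] ^ ι` whose remaining coordinates are all
equal to `N`. -/
def farFace (N : ℕ) (J : Finset ι) : Finset (ι → ℕ) :=
  Fintype.piFinset fun i => if i ∈ J then Finset.range N else {N}

lemma mem_farFace {N : ℕ} {J : Finset ι} {x : ι → ℕ} :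
    x ∈ farFace N J ↔ (∀ i ∈ J, x i < N) ∧ ∀ i ∉ J, x i = N := by
  simp only [farFace, Fintype.mem_piFinset, ← forall_and]
  refine forall_congr' fun i => ?_
  by_cases hi : i ∈ J <;> simp [hi]

lemma sum_farFace_add (N : ℕ) {J : Finset ι} {j : ι} (hj : j ∈ J) (g : (ι → ℕ) → R) :
    ∑ x ∈ farFace N J, (g (x + Pi.single j 1) + g x)
      = ∑ y ∈ farFace N (J.erase j), (g y + g (update y j 0)) := by
  have telescope (y : ι → ℕ) : ∑ t ∈ Finset.range N, (g (update y j (t + 1)) + g (update y j t))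
      = g (update y j N) + g (update y j 0) := by
    simpa only [CharTwo.sub_eq_add] using Finset.sum_range_sub (fun t => g (update y j t)) N
  calc ∑ x ∈ farFace N J, (g (x + Pi.single j 1) + g x)
      = ∑ p ∈ farFace N (J.erase j) ×ˢ Finset.range N,
          (g (update p.1 j (p.2 + 1)) + g (update p.1 j p.2)) := by
        refine Finset.sum_nbij' (fun x => (update x j N, x j)) (fun p => update p.1 j p.2)
          (fun x hx => ?_) (fun p hp => ?_) (fun x _ => by simp) (fun p hp => ?_) fun x _ => ?_
        · simp only [Finset.mem_product, Finset.mem_range, mem_farFace] at hx ⊢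
          grind
        · simp only [Finset.mem_product, Finset.mem_range, mem_farFace] at hp ⊢
          grind
        · have hpj : p.1 j = N := (mem_farFace.1 (Finset.mem_product.1 hp).1).2 j (by simp)
          ext <;> simp [← hpj]
        · have hx : x + Pi.single j 1 = update x j (x j + 1) := by
            ext i
            rcases eq_or_ne i j with rfl | hij <;> simp [*]
          simp [hx]
    _ = ∑ y ∈ farFace N (J.erase j), (g y + g (update y j 0)) := by
        rw [Finset.sum_product]
        refine Finset.sum_congr rfl fun y hy => ?_
        have hyj : y j = N := (mem_farFace.1 hy).2 j (Finset.notMem_erase j _)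
        rw [telescope, ← hyj, update_eq_self]

/-- Stokes' theorem modulo two. -/
lemma sum_coboundary_farFace (N : ℕ) (J : Finset ι) (ω : CubicalCochain ι R) :
    ∑ x ∈ farFace N J, coboundary ω x J = ∑ j ∈ J, ∑ y ∈ farFace N (J.erase j),
      (ω y (J.erase j) + ω (update y j 0) (J.erase j)) := by
  simp only [coboundary]
  rw [Finset.sum_comm]
  exact Finset.sum_congr rfl fun j hj => sum_farFace_add N hj fun x => ω x (J.erase j)

lemma sum_cupDiffs_farFace {f : ι → (ι → ℕ) → R} {N : ℕ} (h₀ : ∀ i x, x i = 0 → f i x = 0)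
    (h₁ : ∀ i x, x i = N → f i x = 1) {L : List ι} (hL : L.Nodup) :
    ∑ x ∈ farFace N L.toFinset, cupDiffs f L x L.toFinset = 1 := by
  induction L with
  | nil => simp [farFace, cupDiffs, Fintype.piFinset_singleton]
  | cons i L ih =>
    obtain ⟨hi, hL⟩ := List.nodup_cons.1 hL
    have hiJ : i ∉ L.toFinset := by simpa using hi
    have other_faces (j : ι) (hj : j ∈ L.toFinset) :
        ∑ y ∈ farFace N ((insert i L.toFinset).erase j),
          (f i y * cupDiffs f L y ((insert i L.toFinset).erase j) + f i (update y j 0) *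
            cupDiffs f L (update y j 0) ((insert i L.toFinset).erase j)) = 0 := by
      refine Finset.sum_eq_zero fun y hy => ?_
      have hyj : y j = N := (mem_farFace.1 hy).2 j (Finset.notMem_erase j _)
      have hjL : j ∈ L := List.mem_toFinset.1 hj
      rw [cupDiffs_eq_zero hjL fun z hz =>
          h₁ j z ((apply_eq_of_mem_cube hz (Finset.notMem_erase j _)).trans hyj),
        cupDiffs_eq_zero hjL fun z hz =>
          h₀ j z ((apply_eq_of_mem_cube hz (Finset.notMem_erase j _)).trans (update_self ..)),
        mul_zero, mul_zero, add_zero]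
    rw [List.toFinset_cons, cupDiffs, diffCup_eq_coboundary _ (coboundary_cupDiffs f L),
      sum_coboundary_farFace, Finset.sum_insert hiJ, Finset.sum_eq_zero other_faces, add_zero,
      Finset.erase_insert hiJ, ← ih hL]
    refine Finset.sum_congr rfl fun y hy => ?_
    have hyi : y i = N := (mem_farFace.1 hy).2 i hiJ
    rw [h₁ i y hyi, h₀ i _ (update_self ..), one_mul, zero_mul, add_zero]

end CharTwo

end Cubical

/-- The combinatorial Poincaré–Miranda theorem. -/
theorem exists_forall_mixed_Icc {ι : Type*} [Finite ι] {N : ℕ} {p : ι → (ι → ℕ) → Prop}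
    (h₀ : ∀ i x, x i = 0 → ¬ p i x) (h₁ : ∀ i x, x i = N → p i x) :
    ∃ x : ι → ℕ, (∀ i, x i < N) ∧
      ∀ i, (∃ y ∈ Icc x (x + 1), p i y) ∧ ∃ y ∈ Icc x (x + 1), ¬ p i y := by
  classical
  cases nonempty_fintype ι
  let f : ι → (ι → ℕ) → ZMod 2 := fun i x => if p i x then 1 else 0
  have hsum := sum_cupDiffs_farFace (f := f) (fun i x hx => if_neg (h₀ i x hx))
    (fun i x hx => if_pos (h₁ i x hx)) (Finset.nodup_toList Finset.univ)
  rw [Finset.toList_toFinset] at hsum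
  obtain ⟨x, hx, hne⟩ := Finset.exists_ne_zero_of_sum_ne_zero (hsum ▸ one_ne_zero)
  refine ⟨x, fun i => (mem_farFace.1 hx).1 i (Finset.mem_univ i), fun i => ?_⟩
  rw [← cube_univ]
  have hi : i ∈ Finset.univ.toList := Finset.mem_toList.2 (Finset.mem_univ i)
  constructor <;> by_contra! h
  · exact hne (cupDiffs_eq_zero hi fun y hy => if_neg (h y hy))
  · exact hne (cupDiffs_eq_zero hi fun y hy => if_pos (h y hy))

section PoincareMiranda

variable {ι : Type*}

/-- The point `a / N` of the unit cube, for lattice points `a ∈ [0, N] ^ ι`; the projection onto the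
unit interval makes it a total function of `a`. -/
def latticePoint (N : ℕ) (a : ι → ℕ) : ι → unitInterval :=
  fun i => projIcc 0 1 zero_le_one ((a i : ℝ) / N)

lemma dist_latticePoint_le [Fintype ι] (N : ℕ) {a b : ι → ℕ} (hb : b ∈ Icc a (a + 1)) :
    dist (latticePoint N a) (latticePoint N b) ≤ (N : ℝ)⁻¹ := by
  refine (dist_pi_le_iff (by positivity)).2 fun i => ?_
  have hlow : (a i : ℝ) ≤ b i := by exact_mod_cast hb.1 i
  have hupp : (b i : ℝ) ≤ a i + 1 := by exact_mod_cast hb.2 i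
  calc dist (latticePoint N a i) (latticePoint N b i) ≤ dist ((a i : ℝ) / N) (b i / N) := by
        simpa [latticePoint] using (LipschitzWith.projIcc zero_le_one).dist_le_mul
          ((a i : ℝ) / N) (b i / N)
    _ = |(a i : ℝ) - b i| / N := by rw [Real.dist_eq, ← sub_div, abs_div, Nat.abs_cast]
    _ ≤ 1 / N := by gcongr; exact abs_le.2 ⟨by linarith, by linarith⟩
    _ = (N : ℝ)⁻¹ := one_div _

lemma exists_forall_abs_lt_of_boundary_signs [Finite ι] {F : (ι → unitInterval) → ι → ℝ}
    (hF : Continuous F) (h₀ : ∀ i x, x i = 0 → F x i ≤ 0) (h₁ : ∀ i x, x i = 1 → 0 ≤ F x i)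
    {ε : ℝ} (hε : 0 < ε) : ∃ x, ∀ i, |F x i| < ε := by
  cases nonempty_fintype ι
  obtain ⟨δ, hδ, hFδ⟩ := Metric.uniformContinuous_iff.1
    (CompactSpace.uniformContinuous_of_continuous hF) ε hε
  obtain ⟨n, hn⟩ := exists_nat_one_div_lt hδ
  let N := n + 1
  obtain ⟨a, -, ha⟩ := exists_forall_mixed_Icc (N := N)
    (p := fun i a => a i = N ∨ a i ≠ 0 ∧ 0 < F (latticePoint N a) i)
    (fun i a hi => by simp [hi, N]) (fun i a hi => Or.inl hi)
  have close (i : ι) {b : ι → ℕ} (hb : b ∈ Icc a (a + 1)) :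
      |F (latticePoint N a) i - F (latticePoint N b) i| < ε :=
    (dist_le_pi_dist _ _ i).trans_lt
      (hFδ ((dist_latticePoint_le N hb).trans_lt (by simpa [N] using hn)))
  refine ⟨latticePoint N a, fun i => ?_⟩
  obtain ⟨⟨b, hb, hpos⟩, c, hc, hneg⟩ := ha i
  have hFb : 0 ≤ F (latticePoint N b) i := by
    rcases hpos with hbN | hb
    · refine h₁ i _ ?_
      simpa [latticePoint, hbN, N] using (div_self n.cast_add_one_ne_zero).ge
    · exact hb.2.le
  have hFc : F (latticePoint N c) i ≤ 0 := by
    rcases eq_or_ne (c i) 0 with hc0 | hc0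
    · refine h₀ i _ ?_
      simp [latticePoint, hc0]
    · exact not_lt.1 fun hlt => hneg (Or.inr ⟨hc0, hlt⟩)
  have := abs_lt.1 (close i hb)
  have := abs_lt.1 (close i hc)
  exact abs_lt.2 ⟨by linarith, by linarith⟩

/-- The Poincaré–Miranda theorem. -/
theorem exists_eq_zero_of_boundary_signs [Finite ι] {F : (ι → unitInterval) → ι → ℝ}
    (hF : Continuous F) (h₀ : ∀ i x, x i = 0 → F x i ≤ 0) (h₁ : ∀ i x, x i = 1 → 0 ≤ F x i) :
    ∃ x, F x = 0 := by
  cases nonempty_fintype ι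
  obtain ⟨x, -, hx⟩ := isCompact_univ.exists_isMinOn univ_nonempty hF.norm.continuousOn
  refine ⟨x, norm_le_zero_iff.1 (le_of_forall_pos_le_add fun ε hε => ?_)⟩
  obtain ⟨y, hy⟩ := exists_forall_abs_lt_of_boundary_signs hF h₀ h₁ hε
  rw [zero_add]
  exact (hx (mem_univ y)).trans ((pi_norm_le_iff_of_nonneg hε.le).2 fun i => (hy i).le)

end PoincareMiranda

/-- The cover of the `n`-cube in Lebesgue's covering theorem: its `i`-th set is given by
`0 < x (i - 1)` and `x i < 1`, as far as these coordinates exist. For each coordinate `k`, the set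
with index `k.succ` misses the face `x k = 0` and the one with index `k.castSucc` misses the
opposite face `x k = 1`. -/
def lebesgueCover (n : ℕ) (i : Fin (n + 1)) : Set (Fin n → unitInterval) :=
  {x | (∀ k : Fin n, k.succ = i → 0 < x k) ∧ ∀ k : Fin n, k.castSucc = i → x k < 1}

lemma isOpen_lebesgueCover {n : ℕ} (i : Fin (n + 1)) : IsOpen (lebesgueCover n i) := by
  simp only [lebesgueCover, ofPred_and, ofPred_forall]
  exact (isOpen_iInter_of_finite fun k => isOpen_iInter_of_finite fun _ =>
    isOpen_lt continuous_const (continuous_apply k)).inter (isOpen_iInter_of_finite fun k =>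
      isOpen_iInter_of_finite fun _ => isOpen_lt (continuous_apply k) continuous_const)

lemma iUnion_lebesgueCover (n : ℕ) : ⋃ i, lebesgueCover n i = univ := by
  refine eq_univ_of_forall fun x => mem_iUnion.2 ?_
  by_contra! hx
  have hpos (i : Fin (n + 1)) : ∀ k : Fin n, k.succ = i → 0 < x k := by
    induction i using Fin.induction with
    | zero => exact fun k hk => absurd hk k.succ_ne_zero
    | succ j ih =>
      intro k hk
      obtain rfl := Fin.succ_injective _ hk
      by_contra! hk0
      refine hx _ ⟨ih, fun l hl => ?_⟩
      obtain rfl := Fin.castSucc_injective _ hl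
      exact hk0.trans_lt zero_lt_one
  exact hx (Fin.last n) ⟨hpos _, fun k hk => absurd hk k.castSucc_ne_last⟩

lemma exists_forall_eq_of_vanish_on_faces {n : ℕ} {ρ : Fin (n + 1) → (Fin n → unitInterval) → ℝ}
    (hρ : ∀ i, Continuous (ρ i)) (hnonneg : ∀ i x, 0 ≤ ρ i x)
    (h₀ : ∀ (k : Fin n) x, x k = 0 → ρ k.succ x = 0)
    (h₁ : ∀ (k : Fin n) x, x k = 1 → ρ k.castSucc x = 0) :
    ∃ x, ∀ i, ρ i x = ρ 0 x := by
  obtain ⟨x, hx⟩ := exists_eq_zero_of_boundary_signs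
    (F := fun x k => ρ (Fin.succ k) x - ρ (Fin.castSucc k) x) (by fun_prop)
    (fun k x hk => by simpa [h₀ k x hk] using hnonneg _ x)
    (fun k x hk => by simpa [h₁ k x hk] using hnonneg _ x)
  refine ⟨x, fun i => ?_⟩
  induction i using Fin.induction with
  | zero => rfl
  | succ k ih => rw [← ih, sub_eq_zero.1 (congrFun hx k)]

/-- Lebesgue's covering theorem. -/
theorem CovDimLE.le_of_cube {n m : ℕ} (h : CovDimLE (Fin n → unitInterval) m) : n ≤ m := by
  obtain ⟨V, hV_open, hVU, hV_cover, hV_card⟩ :=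
    h _ (lebesgueCover n) inferInstance isOpen_lebesgueCover (iUnion_lebesgueCover n)
  obtain ⟨ρ, hρ⟩ := PartitionOfUnity.exists_isSubordinate isClosed_univ V hV_open hV_cover.ge
  have mem_V {i : Fin (n + 1)} {x : Fin n → unitInterval} (hx : ρ i x ≠ 0) : x ∈ V i :=
    hρ i (subset_tsupport _ hx)
  obtain ⟨x, hx⟩ := exists_forall_eq_of_vanish_on_faces (ρ := fun i => ρ i)
    (fun i => (ρ i).continuous) ρ.nonneg
    (fun k x hk => by_contra fun hne => ((hVU _ (mem_V hne)).1 k rfl).ne' hk)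
    (fun k x hk => by_contra fun hne => ((hVU _ (mem_V hne)).2 k rfl).ne hk)
  have hne : ρ 0 x ≠ 0 := fun h0 => by
    simpa [finsum_eq_sum_of_fintype, hx, h0] using ρ.sum_eq_one (mem_univ x)
  have hall : {i | x ∈ V i} = univ := eq_univ_of_forall fun i => mem_V ((hx i).trans_ne hne)
  simpa [hall] using hV_card x

theorem CovDimLE.of_isClosedEmbedding {X Z : Type*} [TopologicalSpace X] [TopologicalSpace Z]
    {f : X → Z} (hf : Topology.IsClosedEmbedding f) {n : ℕ} (h : CovDimLE Z n) :
    CovDimLE X n := by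
  intro ι U hfin hU hcov
  rcases isEmpty_or_nonempty ι with hι | ⟨⟨i₀⟩⟩
  · exact ⟨U, hU, fun _ => Subset.rfl, hcov, fun _ => by simp [Set.eq_empty_of_isEmpty]⟩
  choose W hW hWU using fun i => hf.isInducing.isOpen_iff.1 (hU i)
  obtain ⟨V, hV, hVW, hVcov, hVcard⟩ := h ι (fun i => W i ∪ (range f)ᶜ) hfin
    (fun i => (hW i).union hf.isClosed_range.isOpen_compl) (by
      refine eq_univ_of_forall fun z => mem_iUnion.2 ?_
      by_cases hz : z ∈ range f
      · obtain ⟨x, rfl⟩ := hz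
        obtain ⟨i, hi⟩ := iUnion_eq_univ_iff.1 hcov x
        exact ⟨i, Or.inl (by rwa [← hWU] at hi)⟩
      · exact ⟨i₀, Or.inr hz⟩)
  refine ⟨fun i => f ⁻¹' V i, fun i => (hV i).preimage hf.continuous, fun i x hx => ?_,
    by rw [← preimage_iUnion, hVcov, preimage_univ], fun x => hVcard (f x)⟩
  rw [← hWU]
  exact (hVW i hx).resolve_right fun hx' => hx' (mem_range_self x)

lemma FinDimSpace.of_isClosedEmbedding {X Z : Type*} [TopologicalSpace X] [TopologicalSpace Z]
    {f : X → Z} (hf : Topology.IsClosedEmbedding f) : FinDimSpace Z → FinDimSpace X :=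
  Exists.imp fun _ h => h.of_isClosedEmbedding hf

/-- Assign each point of the net `t` to one member of the cover containing a large ball around
it. -/
theorem CovDimLE.of_forall_exists_net {X : Type*} [PseudoMetricSpace X] [CompactSpace X] {m : ℕ}
    (h : ∀ ε > 0, ∃ r ≤ ε, ∃ t : Set X, (∀ x, ∃ p ∈ t, dist x p < r) ∧
      ∀ x, (t ∩ Metric.ball x r).encard ≤ m + 1) : CovDimLE X m := by
  intro ι U _ hU hcov
  obtain ⟨δ, hδ, hUδ⟩ := lebesgue_number_lemma_of_metric isCompact_univ hU hcov.ge
  choose g hg using fun x => hUδ x (mem_univ x)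
  obtain ⟨r, hrδ, t, ht_cover, ht_card⟩ := h δ hδ
  refine ⟨fun i => ⋃ p ∈ t ∩ g ⁻¹' {i}, Metric.ball p r,
    fun i => isOpen_biUnion fun _ _ => Metric.isOpen_ball, fun i => iUnion₂_subset ?_,
    eq_univ_of_forall fun x => ?_, fun x => ?_⟩
  · rintro p ⟨-, rfl⟩
    exact (Metric.ball_subset_ball hrδ).trans (hg p)
  · obtain ⟨p, hpt, hp⟩ := ht_cover x
    exact mem_iUnion.2 ⟨g p, mem_biUnion ⟨hpt, rfl⟩ hp⟩
  · have hsub : {i | x ∈ ⋃ p ∈ t ∩ g ⁻¹' {i}, Metric.ball p r} ⊆ g '' (t ∩ Metric.ball x r) := by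
      intro i hi
      obtain ⟨p, ⟨hpt, hpi⟩, hp⟩ := mem_iUnion₂.1 hi
      exact ⟨p, ⟨hpt, Metric.mem_ball_comm.1 hp⟩, hpi⟩
    refine ENat.natCast_le_natCast.1 (((ncard_le_encard _).trans (encard_le_encard hsub)).trans
      ((encard_image_le _ _).trans ?_))
    exact_mod_cast ht_card x

lemma abs_sub_div_lt_inv_iff {x k N : ℝ} (hN : 0 < N) : |x - k / N| < N⁻¹ ↔ |x * N - k| < 1 := by
  rw [sub_div' hN.ne', abs_div, abs_of_pos hN, ← one_div, div_lt_div_iff_of_pos_right hN]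

lemma dist_latticePoint_floor_lt {ι : Type*} [Fintype ι] {N : ℕ} (hN : 0 < N)
    (x : ι → unitInterval) : dist x (latticePoint N fun i => ⌊(x i : ℝ) * N⌋₊) < (N : ℝ)⁻¹ := by
  have hN' : (0 : ℝ) < N := by exact_mod_cast hN
  refine (dist_pi_lt_iff (by positivity)).2 fun i => ?_
  have hle := Nat.floor_le (mul_nonneg (x i).2.1 hN'.le)
  have hlt := Nat.lt_floor_add_one ((x i : ℝ) * N)
  calc dist (x i) (projIcc 0 1 zero_le_one ((⌊(x i : ℝ) * N⌋₊ : ℝ) / N))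
      ≤ dist (x i : ℝ) ((⌊(x i : ℝ) * N⌋₊ : ℝ) / N) := by
        simpa [projIcc_val] using (LipschitzWith.projIcc zero_le_one).dist_le_mul
          (x i : ℝ) ((⌊(x i : ℝ) * N⌋₊ : ℝ) / N)
    _ < (N : ℝ)⁻¹ := by
        rw [Real.dist_eq, abs_sub_div_lt_inv_iff hN']
        exact abs_lt.2 ⟨by linarith, by linarith⟩

lemma encard_latticePoint_image_inter_ball_le {ι : Type*} [Fintype ι] {N : ℕ} (hN : 0 < N)
    (x : ι → unitInterval) :
    (latticePoint N '' Iic (const ι N) ∩ Metric.ball x (N : ℝ)⁻¹).encard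
      ≤ 2 ^ Fintype.card ι := by
  have hN' : (0 : ℝ) < N := by exact_mod_cast hN
  let q (k : ℕ) : unitInterval := projIcc 0 1 zero_le_one ((k : ℝ) / N)
  have hsub : latticePoint N '' Iic (const ι N) ∩ Metric.ball x (N : ℝ)⁻¹ ⊆
      pi univ fun i => {q ⌊(x i : ℝ) * N⌋₊, q (⌊(x i : ℝ) * N⌋₊ + 1)} := by
    rintro _ ⟨⟨a, ha, rfl⟩, hax⟩ i -
    have hval : (latticePoint N a i : ℝ) = a i / N :=
      congrArg Subtype.val (projIcc_of_mem zero_le_one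
        ⟨by positivity, (div_le_one hN').2 (by exact_mod_cast ha i)⟩)
    have hscaled : |(x i : ℝ) * N - a i| < 1 := by
      rw [← abs_sub_div_lt_inv_iff hN', ← hval]
      exact (dist_le_pi_dist x (latticePoint N a) i).trans_lt (Metric.mem_ball'.1 hax)
    have hcases : a i = ⌊(x i : ℝ) * N⌋₊ ∨ a i = ⌊(x i : ℝ) * N⌋₊ + 1 := by
      obtain ⟨hlow, hupp⟩ := abs_lt.1 hscaled
      have : ⌊(x i : ℝ) * N⌋₊ < a i + 1 := (Nat.floor_lt' (by simp)).2 (by push_cast; linarith)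
      have : a i < ⌊(x i : ℝ) * N⌋₊ + 2 := by
        have := Nat.lt_floor_add_one ((x i : ℝ) * N)
        exact_mod_cast (by linarith : (a i : ℝ) < ⌊(x i : ℝ) * N⌋₊ + 2)
      omega
    exact hcases.imp (congrArg q) (congrArg q)
  calc _ ≤ (pi univ fun i => {q ⌊(x i : ℝ) * N⌋₊, q (⌊(x i : ℝ) * N⌋₊ + 1)}).encard :=
        encard_le_encard hsub
    _ = ∏ i, ({q ⌊(x i : ℝ) * N⌋₊, q (⌊(x i : ℝ) * N⌋₊ + 1)} : Set unitInterval).encard :=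
        encard_pi_eq_prod_encard
    _ ≤ 2 ^ Fintype.card ι := Finset.prod_le_pow_card _ _ _ fun i _ =>
        (encard_insert_le _ _).trans (by rw [encard_singleton]; norm_num)

theorem finDimSpace_cube (ι : Type*) [Finite ι] : FinDimSpace (ι → unitInterval) := by
  cases nonempty_fintype ι
  refine ⟨2 ^ Fintype.card ι, .of_forall_exists_net fun ε hε => ?_⟩
  obtain ⟨n, hn⟩ := exists_nat_one_div_lt hε
  refine ⟨((n + 1 : ℕ) : ℝ)⁻¹, by simpa using hn.le, latticePoint (n + 1) '' Iic (const ι (n + 1)),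
    fun x => ⟨_, mem_image_of_mem _ fun i => ?_, dist_latticePoint_floor_lt n.succ_pos x⟩,
    fun x => ?_⟩
  · exact Nat.floor_le_of_le (mul_le_of_le_one_left (Nat.cast_nonneg _) (x i).2.2)
  · refine (encard_latticePoint_image_inter_ball_le n.succ_pos x).trans ?_
    exact_mod_cast Nat.le_succ _

lemma finDimSpace_pi_of_cubes {ι : Type*} [Finite ι] {Y : ι → Type*} [∀ i, TopologicalSpace (Y i)]
    [∀ i, T2Space (Y i)] {n : ι → ℕ} {e : ∀ i, (Fin (n i) → unitInterval) → Y i}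
    (he : ∀ i, Continuous (e i)) (hinj : ∀ i, Injective (e i)) :
    FinDimSpace (pi univ fun i => range (e i)) := by
  have hmap : Topology.IsClosedEmbedding (Pi.map e) :=
    (Continuous.piMap he).isClosedEmbedding (Injective.piMap hinj)
  have huncurry : Topology.IsClosedEmbedding
      fun (f : ∀ i, Fin (n i) → unitInterval) (p : Σ i, Fin (n i)) => f p.1 p.2 :=
    Continuous.isClosedEmbedding (by fun_prop) fun f g hfg =>
      funext₂ fun i k => congrFun hfg ⟨i, k⟩
  rw [← range_piMap]
  exact ((finDimSpace_cube (Σ i, Fin (n i))).of_isClosedEmbedding huncurry).of_isClosedEmbedding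
    hmap.isEmbedding.toHomeomorph.symm.isClosedEmbedding

section SpaceConstruction

open TopologicalSpace
open scoped OnePoint

instance instWeaklyLocallyCompactSpaceSigma {ι : Type*} {X : ι → Type*}
    [∀ i, TopologicalSpace (X i)] [∀ i, WeaklyLocallyCompactSpace (X i)] :
    WeaklyLocallyCompactSpace (Σ i, X i) where
  exists_compact_mem_nhds := by
    rintro ⟨i, x⟩
    obtain ⟨K, hK, hKx⟩ := exists_compact_mem_nhds x
    exact ⟨Sigma.mk i '' K, hK.image continuous_sigmaMk,
      Topology.IsOpenEmbedding.sigmaMk.image_mem_nhds.2 hKx⟩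

instance instSecondCountableTopologyOnePoint {X : Type*} [TopologicalSpace X]
    [SecondCountableTopology X] [T2Space X] [WeaklyLocallyCompactSpace X] :
    SecondCountableTopology (OnePoint X) := by
  let K : CompactExhaustion X := default
  let B : Set (Set (OnePoint X)) :=
    image (↑) '' countableBasis X ∪ range fun n => ((↑) '' (K n : Set X))ᶜ
  have hB_open : ∀ u ∈ B, IsOpen u := by
    rintro _ (⟨b, hb, rfl⟩ | ⟨n, rfl⟩)
    · exact OnePoint.isOpen_image_coe.2 (isOpen_of_mem_countableBasis hb)
    · exact OnePoint.isOpen_compl_image_coe.2 ⟨(K.isCompact n).isClosed, K.isCompact n⟩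
  have hB : IsTopologicalBasis B := by
    refine isTopologicalBasis_of_isOpen_of_nhds hB_open fun y u hy hu => ?_
    induction y with
    | infty =>
      obtain ⟨n, hn⟩ := K.exists_superset_of_isCompact ((OnePoint.isOpen_iff_of_mem hy).1 hu).2
      refine ⟨((↑) '' (K n : Set X))ᶜ, Or.inr ⟨n, rfl⟩, by simp, fun z hz => ?_⟩
      induction z with
      | infty => exact hy
      | coe x => exact by_contra fun hx => hz (mem_image_of_mem _ (hn hx))
    | coe x =>
      obtain ⟨b, hb, hxb, hbu⟩ := (isBasis_countableBasis X).exists_subset_of_mem_open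
        (mem_preimage.2 hy) (hu.preimage OnePoint.continuous_coe)
      exact ⟨(↑) '' b, Or.inl ⟨b, hb, rfl⟩, mem_image_of_mem _ hxb, image_subset_iff.2 hbu⟩
  exact hB.secondCountableTopology
    (((countable_countableBasis X).image _).union (countable_range _))

/-- The one-point compactification of the disjoint union of the cubes `[0, 1] ^ n`, `n ∈ ℕ`. -/
abbrev CubeCompactum : Type := OnePoint (Σ n : ℕ, Fin n → unitInterval)

instance : MetrizableSpace CubeCompactum := metrizableSpace_of_t3_secondCountable _

namespace CubeCompactum

/-- The inclusion of the `n`-dimensional cube. -/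
def ofCube (n : ℕ) (w : Fin n → unitInterval) : CubeCompactum :=
  ((⟨n, w⟩ : Σ n : ℕ, Fin n → unitInterval) : CubeCompactum)

lemma isOpenEmbedding_ofCube (n : ℕ) : Topology.IsOpenEmbedding (ofCube n) :=
  OnePoint.isOpenEmbedding_coe.comp .sigmaMk

lemma ofCube_ne_infty (n : ℕ) (w : Fin n → unitInterval) : ofCube n w ≠ ∞ := OnePoint.coe_ne_infty _

lemma exists_forall_ofCube_mem {V : Set CubeCompactum} (hV : IsOpen V) (h : ∞ ∈ V) :
    ∃ N, ∀ n ≥ N, ∀ w, ofCube n w ∈ V := by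
  obtain ⟨s, t, hs, -, hst⟩ := ((OnePoint.isOpen_iff_of_mem h).1 hV).2.sigma_exists_finite_sigma_eq
  obtain ⟨N, hN⟩ := hs.bddAbove
  refine ⟨N + 1, fun n hn w => by_contra fun hw => ?_⟩
  have hmem : (⟨n, w⟩ : Σ n : ℕ, Fin n → unitInterval) ∈ s.sigma t := hst ▸ hw
  exact (hN hmem.1).not_gt hn

/-- The cube containing a given point, or `{∞}` for the point `∞`. -/
def cell (y : CubeCompactum) : Set CubeCompactum := y.elim {∞} fun s => range (ofCube s.1)

lemma mem_cell_self (y : CubeCompactum) : y ∈ cell y := by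
  induction y using OnePoint.rec with
  | infty => exact mem_singleton _
  | coe s => exact mem_range_self s.2

lemma isOpen_cell {y : CubeCompactum} (hy : y ≠ ∞) : IsOpen (cell y) := by
  induction y using OnePoint.rec with
  | infty => exact absurd rfl hy
  | coe s => exact (isOpenEmbedding_ofCube s.1).isOpen_range

lemma eq_infty_iff_of_mem_cell {y z : CubeCompactum} (hz : z ∈ cell y) : z = ∞ ↔ y = ∞ := by
  induction y using OnePoint.rec with
  | infty => exact iff_of_true hz rfl
  | coe s =>
    obtain ⟨w, rfl⟩ := hz
    exact iff_of_false (ofCube_ne_infty _ w) (OnePoint.coe_ne_infty s)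

lemma exists_cube_range_eq_cell (y : CubeCompactum) :
    ∃ (n : ℕ) (e : (Fin n → unitInterval) → CubeCompactum),
      Continuous e ∧ Injective e ∧ range e = cell y := by
  induction y using OnePoint.rec with
  | infty => exact ⟨0, fun _ => ∞, continuous_const, injective_of_subsingleton _, range_const⟩
  | coe s => exact ⟨s.1, ofCube s.1, (isOpenEmbedding_ofCube _).continuous,
      (isOpenEmbedding_ofCube _).injective, rfl⟩

end CubeCompactum

end SpaceConstruction

section Derived

lemma fdDerived_zero (X : Type*) [TopologicalSpace X] : fdDerived X 0 = univ := by
  rw [fdDerived, Ordinal.limitRecOn_zero]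

lemma fdDerived_add_one (X : Type*) [TopologicalSpace X] (α : Ordinal) :
    fdDerived X (α + 1) = fdDerived X α \ fdI X (fdDerived X α) := by
  simp only [fdDerived, Ordinal.limitRecOn_add_one]

open scoped OnePoint

variable {ι : Type*} [Finite ι]

open CubeCompactum

/-- The points of `CubeCompactum ^ ι` with at least `j` infinite coordinates. -/
def inftyCountGE (ι : Type*) (j : ℕ) : Set (ι → CubeCompactum) := {x | j ≤ {i | x i = ∞}.ncard}

lemma mem_fdI_inftyCountGE {x : ι → CubeCompactum} {j : ℕ} (hx : {i | x i = ∞}.ncard = j) :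
    x ∈ fdI (ι → CubeCompactum) (inftyCountGE ι j) := by
  let U : Set (ι → CubeCompactum) := {i | x i ≠ ∞}.pi fun i => cell (x i)
  have hU : U ∩ inftyCountGE ι j = univ.pi fun i => cell (x i) := by
    ext z
    constructor
    · rintro ⟨hzU, hz⟩ i -
      have hsub : {i | z i = ∞} ⊆ {i | x i = ∞} := fun i hi => by_contra fun hxi =>
        hxi ((eq_infty_iff_of_mem_cell (hzU i hxi)).1 hi)
      have heq := eq_of_subset_of_ncard_le hsub (hx.trans_le hz)
      by_cases hi : x i = ∞
      · rw [show z i = x i from (heq.ge hi).trans hi.symm]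
        exact mem_cell_self _
      · exact hzU i hi
    · intro hz
      refine ⟨fun i _ => hz i trivial, hx.ge.trans_eq ?_⟩
      simp only [eq_infty_iff_of_mem_cell (hz _ trivial)]
  refine ⟨hx.ge, U, isOpen_set_pi (toFinite _) fun i hi => isOpen_cell hi,
    fun i _ => mem_cell_self _, ?_⟩
  choose n e he hinj hrange using fun i => exists_cube_range_eq_cell (x i)
  rw [hU, ← funext hrange]
  exact finDimSpace_pi_of_cubes he hinj

lemma notMem_fdI_inftyCountGE {x : ι → CubeCompactum} {j : ℕ} (hx : j < {i | x i = ∞}.ncard) :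
    x ∉ fdI (ι → CubeCompactum) (inftyCountGE ι j) := by
  classical
  rintro ⟨-, U, hU, hxU, n, hn⟩
  obtain ⟨i₀, hi₀⟩ := nonempty_of_ncard_ne_zero (Nat.ne_zero_of_lt hx)
  have hcont : Continuous (update x i₀) := continuous_const.update i₀ continuous_id
  obtain ⟨N, hN⟩ := exists_forall_ofCube_mem (hU.preimage hcont)
    (show update x i₀ ∞ ∈ U by rwa [← hi₀, update_eq_self])
  let p := max N (n + 1)
  have hcount (y : CubeCompactum) : update x i₀ y ∈ inftyCountGE ι j := by
    have hsub : {i | x i = ∞} \ {i₀} ⊆ {i | update x i₀ y i = ∞} := fun i hi => by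
      simpa [update_of_ne hi.2] using hi.1
    refine le_trans ?_ (ncard_le_ncard hsub)
    rw [ncard_sdiff_singleton_of_mem hi₀]
    exact Nat.le_sub_one_of_lt hx
  let g (w : Fin p → unitInterval) : ↥(U ∩ inftyCountGE ι j) :=
    ⟨update x i₀ (ofCube p w), hN p (le_max_left _ _) w, hcount _⟩
  have hg : Topology.IsClosedEmbedding g :=
    ((hcont.comp (isOpenEmbedding_ofCube p).continuous).subtype_mk _).isClosedEmbedding
      fun w w' h => (isOpenEmbedding_ofCube p).injective
        (update_injective x i₀ (congrArg Subtype.val h))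
  exact (le_max_right N (n + 1)).not_gt (Nat.lt_succ_of_le (hn.of_isClosedEmbedding hg).le_of_cube)

theorem fdDerived_pi_cubeCompactum (ι : Type*) [Finite ι] (j : ℕ) :
    fdDerived (ι → CubeCompactum) j = inftyCountGE ι j := by
  induction j with
  | zero => simp [inftyCountGE, fdDerived_zero]
  | succ j ih =>
    rw [Nat.cast_succ, fdDerived_add_one, ih]
    ext x
    refine ⟨fun ⟨hj, hx⟩ => lt_of_le_of_ne hj fun h => hx (mem_fdI_inftyCountGE h.symm),
      fun hj => ⟨Nat.le_of_succ_le hj, notMem_fdI_inftyCountGE hj⟩⟩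

end Derived

/-- for every positive integer `k` there is a compact metrizable space
of fd-height exactly `k`. -/
theorem exists_compact_metrizable_fdHeight_eq (k : ℕ) (hk : 0 < k) :
    ∃ (K : Type) (t : TopologicalSpace K),
      @CompactSpace K t ∧ @TopologicalSpace.MetrizableSpace K t ∧
      @fdDerived K t (k : Ordinal) = ∅ ∧
      ∀ β : Ordinal, β < (k : Ordinal) → @fdDerived K t β ≠ ∅ := by
  obtain ⟨m, rfl⟩ := Nat.exists_eq_succ_of_ne_zero hk.ne'
  refine ⟨Fin m → CubeCompactum, inferInstance, inferInstance, inferInstance, ?_, fun β hβ => ?_⟩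
  · rw [fdDerived_pi_cubeCompactum, eq_empty_iff_forall_notMem]
    intro x hx
    exact Nat.not_succ_le_self m (hx.trans ((ncard_le_card _).trans_eq (Nat.card_fin m)))
  · obtain ⟨j, rfl⟩ := Ordinal.lt_omega0.1 (hβ.trans (Ordinal.natCast_lt_omega0 _))
    have hj : j ≤ m := Nat.lt_succ_iff.1 (by exact_mod_cast hβ)
    rw [fdDerived_pi_cubeCompactum, ← nonempty_iff_ne_empty]
    exact ⟨fun _ => OnePoint.infty, by simpa [inftyCountGE] using hj⟩

end
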